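/- Let C1 and C2 be two vertex-disjoint alternating cycles in a 2-edge-colored graph G. If there is a good pair of edges between C1 and C2, then G contains an alternating cycle whose vertex set is exactly V(C1) ∪ V(C2). -/

import Mathlib

/-- An alternating cycle of length `N` in the 2-edge-colored graph `(G, c)`
(colors: `true` = red, `false` = blue), given by an injective map
`x : ZMod N → V` such that consecutive images are adjacent in `G` and any two
consecutive edges of the cycle have different colors. -/
def IsAltCycle {V : Type*} (G : SimpleGraph V) (c : Sym2 V → Bool) {N : ℕ}
    (x : ZMod N → V) : Prop :=
  Function.Injective x ∧ (∀ i, G.Adj (x i) (x (i + 1))) ∧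
    ∀ i, c s(x i, x (i + 1)) ≠ c s(x (i + 1), x (i + 2))

/-- There is a good pair of edges between the two vertex-disjoint alternating
cycles `x` and `y`: a pair of edges `x s - y t`, `x s' - y t'` with
`s' ∈ {s-1, s+1}`, `t' ∈ {t-1, t+1}` such that `x s, x s', y t', y t, x s`
is a monochromatic 4-cycle of `G`. -/
def HasGoodPair {V : Type*} (G : SimpleGraph V) (c : Sym2 V → Bool) {N M : ℕ}
    (x : ZMod N → V) (y : ZMod M → V) : Prop :=
  ∃ (s s' : ZMod N) (t t' : ZMod M),
    (s' = s - 1 ∨ s' = s + 1) ∧ (t' = t - 1 ∨ t' = t + 1) ∧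
    G.Adj (x s) (y t) ∧ G.Adj (x s') (y t') ∧
    c s(x s, x s') = c s(x s, y t) ∧
    c s(x s', y t') = c s(x s, y t) ∧
    c s(y t', y t) = c s(x s, y t)

/-!
Traverse both cycles so that the monochromatic 4-cycle meets them in the closing edges
`x (-1) – x 0` and `y (-1) – y 0`. Replacing these two edges by `x (-1) – y 0` and `y (-1) – x 0`
splices the cycles into one. All four edges have the same color, so every vertex is still entered
and left through the same colors as before; in particular the new cycle alternates.
-/

section Splice

variable {N M : ℕ}

theorem zmod_val_neg_one_add_one [NeZero N] : (-1 : ZMod N).val + 1 = N := by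
  obtain ⟨k, rfl⟩ := Nat.exists_eq_succ_of_ne_zero (NeZero.ne N)
  rw [ZMod.val_neg_one]

theorem zmod_val_add_one_of_ne_neg_one [NeZero N] {i : ZMod N} (hi : i ≠ -1) :
    (i + 1).val = i.val + 1 := by
  have val_ne : i.val ≠ (-1 : ZMod N).val := (ZMod.val_injective N).ne hi
  have succ_lt : i.val + 1 < N := by
    have := ZMod.val_lt i
    have := zmod_val_neg_one_add_one (N := N)
    omega
  rw [← ZMod.val_natCast_of_lt succ_lt, Nat.cast_succ, ZMod.natCast_zmod_val]

theorem zmod_coe_finEquiv_symm [NeZero N] (i : ZMod N) :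
    ((ZMod.finEquiv N).symm i : ℕ) = i.val := by
  cases N
  · exact absurd rfl (NeZero.ne 0)
  · rfl

theorem zmod_finEquiv_apply [NeZero N] (i : Fin N) : ZMod.finEquiv N i = ((i : ℕ) : ZMod N) := by
  rw [← (ZMod.finEquiv N).symm_apply_apply i, zmod_coe_finEquiv_symm, ZMod.natCast_zmod_val,
    RingEquiv.symm_apply_apply]

/-- The successor function of the cyclic order obtained from those of `ZMod N` and `ZMod M` by
cutting each just before `0` and joining the two pieces end to end. -/
def spliceSucc : ZMod N ⊕ ZMod M → ZMod N ⊕ ZMod M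
  | .inl i => if i = -1 then .inr 0 else .inl (i + 1)
  | .inr j => if j = -1 then .inl 0 else .inr (j + 1)

variable [NeZero N] [NeZero M]

/-- The identification of `ZMod N ⊕ ZMod M` with `ZMod (N + M)` that lists the residues
`0, …, N - 1` of the first summand and then the residues `0, …, M - 1` of the second. -/
def spliceEquiv : ZMod N ⊕ ZMod M ≃ ZMod (N + M) :=
  ((Equiv.sumCongr (ZMod.finEquiv N).toEquiv (ZMod.finEquiv M).toEquiv).symm.trans
    finSumFinEquiv).trans (ZMod.finEquiv (N + M)).toEquiv

theorem spliceEquiv_inl (i : ZMod N) :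
    spliceEquiv (M := M) (.inl i) = (i.val : ZMod (N + M)) := by
  simp [spliceEquiv, zmod_finEquiv_apply, zmod_coe_finEquiv_symm]

theorem spliceEquiv_inr (j : ZMod M) :
    spliceEquiv (N := N) (.inr j) = ((N + j.val : ℕ) : ZMod (N + M)) := by
  simp [spliceEquiv, zmod_finEquiv_apply, zmod_coe_finEquiv_symm]

theorem spliceEquiv_spliceSucc (p : ZMod N ⊕ ZMod M) :
    spliceEquiv (spliceSucc p) = spliceEquiv p + 1 := by
  rcases p with i | j
  · by_cases hi : i = -1
    · simp only [spliceSucc, if_pos hi]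
      rw [hi, spliceEquiv_inl, spliceEquiv_inr, ← Nat.cast_succ, Nat.succ_eq_add_one,
        zmod_val_neg_one_add_one, ZMod.val_zero, add_zero]
    · simp only [spliceSucc, if_neg hi]
      rw [spliceEquiv_inl, spliceEquiv_inl, zmod_val_add_one_of_ne_neg_one hi, Nat.cast_succ]
  · by_cases hj : j = -1
    · simp only [spliceSucc, if_pos hj]
      rw [hj, spliceEquiv_inl, spliceEquiv_inr, ← Nat.cast_succ, Nat.succ_eq_add_one, add_assoc,
        zmod_val_neg_one_add_one, ZMod.val_zero, Nat.cast_zero, ZMod.natCast_self]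
    · simp only [spliceSucc, if_neg hj]
      rw [spliceEquiv_inr, spliceEquiv_inr, zmod_val_add_one_of_ne_neg_one hj, ← add_assoc,
        Nat.cast_succ]

end Splice

section Coloring

variable {V : Type*} {G : SimpleGraph V} {c : Sym2 V → Bool} {N M : ℕ}
  {x : ZMod N → V} {y : ZMod M → V}

/-- The color of the edge through which the walk `x` leaves its `i`-th vertex. -/
def outColor (c : Sym2 V → Bool) (x : ZMod N → V) (i : ZMod N) : Bool :=
  c s(x i, x (i + 1))

theorem adj_sumElim_spliceSucc (hx : ∀ i, G.Adj (x i) (x (i + 1)))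
    (hy : ∀ j, G.Adj (y j) (y (j + 1)))
    (hxy : G.Adj (x (-1)) (y 0)) (hyx : G.Adj (y (-1)) (x 0)) (p : ZMod N ⊕ ZMod M) :
    G.Adj (Sum.elim x y p) (Sum.elim x y (spliceSucc p)) := by
  rcases p with i | j
  · by_cases hi : i = -1
    · simpa [spliceSucc, hi] using hxy
    · simpa [spliceSucc, hi] using hx i
  · by_cases hj : j = -1
    · simpa [spliceSucc, hj] using hyx
    · simpa [spliceSucc, hj] using hy j

theorem color_sumElim_spliceSucc (hxy : c s(x (-1), y 0) = c s(x (-1), x 0))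
    (hyx : c s(y (-1), x 0) = c s(y (-1), y 0)) (p : ZMod N ⊕ ZMod M) :
    c s(Sum.elim x y p, Sum.elim x y (spliceSucc p)) =
      Sum.elim (outColor c x) (outColor c y) p := by
  rcases p with i | j
  · by_cases hi : i = -1
    · simpa [spliceSucc, outColor, hi] using hxy
    · simp [spliceSucc, outColor, hi]
  · by_cases hj : j = -1
    · simpa [spliceSucc, outColor, hj] using hyx
    · simp [spliceSucc, outColor, hj]

namespace IsAltCycle

theorem comp_addLeft (hx : IsAltCycle G c x) (a : ZMod N) :
    IsAltCycle G c (x ∘ Equiv.addLeft a) := by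
  obtain ⟨inj, adj, alt⟩ := hx
  refine ⟨inj.comp (Equiv.injective _), fun i => ?_, fun i => ?_⟩
  · simpa only [Function.comp_apply, Equiv.coe_addLeft, add_assoc] using adj (a + i)
  · simpa only [Function.comp_apply, Equiv.coe_addLeft, add_assoc] using alt (a + i)

theorem comp_neg (hx : IsAltCycle G c x) : IsAltCycle G c (x ∘ Equiv.neg (ZMod N)) := by
  obtain ⟨inj, adj, alt⟩ := hx
  refine ⟨inj.comp (Equiv.injective _), fun i => ?_, fun i => ?_⟩
  · have edge := adj (-(i + 1))
    rw [show -(i + 1) + 1 = -i by ring] at edge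
    exact edge.symm
  · have edges := alt (-(i + 2))
    rw [show -(i + 2) + 1 = -(i + 1) by ring, show -(i + 2) + 2 = -i by ring,
      Sym2.eq_swap (a := x (-(i + 2))), Sym2.eq_swap (b := x (-i))] at edges
    exact edges.symm

theorem exists_closing_edge (hx : IsAltCycle G c x) {s s' : ZMod N}
    (hs : s' = s - 1 ∨ s' = s + 1) :
    ∃ x' : ZMod N → V, IsAltCycle G c x' ∧ Set.range x' = Set.range x ∧
      x' (-1) = x s ∧ x' 0 = x s' := by
  rcases hs with rfl | rfl
  · exact ⟨_, (hx.comp_addLeft (s - 1)).comp_neg, by simp only [EquivLike.range_comp],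
      by simp, by simp⟩
  · exact ⟨_, hx.comp_addLeft (s + 1), EquivLike.range_comp .., by simp, by simp⟩

theorem of_equiv_semiconj {ι : Type*} {succ : ι → ι} {f : ι → V} (e : ι ≃ ZMod N)
    (he : ∀ p, e (succ p) = e p + 1) (inj : Function.Injective f)
    (adj : ∀ p, G.Adj (f p) (f (succ p)))
    (alt : ∀ p, c s(f p, f (succ p)) ≠ c s(f (succ p), f (succ (succ p)))) :
    IsAltCycle G c (f ∘ e.symm) := by
  have symm_succ (i : ZMod N) : e.symm (i + 1) = succ (e.symm i) := by
    rw [Equiv.symm_apply_eq, he, Equiv.apply_symm_apply]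
  refine ⟨inj.comp e.symm.injective, fun i => ?_, fun i => ?_⟩
  · simpa only [Function.comp_apply, symm_succ] using adj (e.symm i)
  · rw [← one_add_one_eq_two, ← add_assoc]
    simpa only [Function.comp_apply, symm_succ] using alt (e.symm i)

theorem outColor_ne_add_one (hx : IsAltCycle G c x) (i : ZMod N) :
    outColor c x i ≠ outColor c x (i + 1) := by
  simpa only [outColor, add_assoc, one_add_one_eq_two] using hx.2.2 i

theorem outColor_ne_spliceSucc (hx : IsAltCycle G c x) (hy : IsAltCycle G c y)
    (hclose : c s(x (-1), x 0) = c s(y (-1), y 0)) (p : ZMod N ⊕ ZMod M) :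
    Sum.elim (outColor c x) (outColor c y) p ≠
      Sum.elim (outColor c x) (outColor c y) (spliceSucc p) := by
  have close : outColor c x (-1) = outColor c y (-1) := by
    simpa only [outColor, neg_add_cancel] using hclose
  have start_x : outColor c x (-1) ≠ outColor c x 0 := by
    simpa only [neg_add_cancel] using hx.outColor_ne_add_one (-1)
  have start_y : outColor c y (-1) ≠ outColor c y 0 := by
    simpa only [neg_add_cancel] using hy.outColor_ne_add_one (-1)
  rcases p with i | j
  · by_cases hi : i = -1
    · simpa [spliceSucc, hi, close] using start_y
    · simpa [spliceSucc, hi] using hx.outColor_ne_add_one i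
  · by_cases hj : j = -1
    · simpa [spliceSucc, hj, ← close] using start_x
    · simpa [spliceSucc, hj] using hy.outColor_ne_add_one j

theorem splice [NeZero N] [NeZero M] (hx : IsAltCycle G c x) (hy : IsAltCycle G c y)
    (hdisj : Disjoint (Set.range x) (Set.range y))
    (adj_xy : G.Adj (x (-1)) (y 0)) (adj_yx : G.Adj (y (-1)) (x 0))
    (color_xy : c s(x (-1), y 0) = c s(x (-1), x 0))
    (color_yx : c s(y (-1), x 0) = c s(y (-1), y 0))
    (color_close : c s(x (-1), x 0) = c s(y (-1), y 0)) :
    IsAltCycle G c (Sum.elim x y ∘ spliceEquiv.symm) := by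
  refine of_equiv_semiconj spliceEquiv spliceEquiv_spliceSucc
    (hx.1.sumElim hy.1 fun i j => hdisj.ne_of_mem ⟨i, rfl⟩ ⟨j, rfl⟩)
    (adj_sumElim_spliceSucc hx.2.1 hy.2.1 adj_xy adj_yx) fun p => ?_
  simp only [color_sumElim_spliceSucc color_xy color_yx]
  exact hx.outColor_ne_spliceSucc hy color_close p

end IsAltCycle

end Coloring

/-- If `C₁` and `C₂` are two vertex-disjoint alternating cycles in a
2-edge-colored graph `G` and there is a good pair of edges between them, then `G`
contains an alternating cycle whose vertex set is exactly `V(C₁) ∪ V(C₂)`. -/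
theorem good_pair_merges_cycles {V : Type*} (G : SimpleGraph V) (c : Sym2 V → Bool)
    {n m : ℕ} (hn : 0 < n) (hm : 0 < m)
    (x : ZMod (2 * n) → V) (y : ZMod (2 * m) → V)
    (hx : IsAltCycle G c x) (hy : IsAltCycle G c y)
    (hdisj : Disjoint (Set.range x) (Set.range y))
    (hgp : HasGoodPair G c x y) :
    ∃ (N : ℕ) (z : ZMod N → V), IsAltCycle G c z ∧
      Set.range z = Set.range x ∪ Set.range y := by
  obtain ⟨s, s', t, t', hs, ht, adj_st, adj_st', color_x, color_st', color_y⟩ := hgp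
  have : NeZero (2 * n) := ⟨by positivity⟩
  have : NeZero (2 * m) := ⟨by positivity⟩
  have ht' : t = t' - 1 ∨ t = t' + 1 := by
    rcases ht with rfl | rfl <;> simp
  obtain ⟨X, hX, range_X, X_last, X_zero⟩ := hx.exists_closing_edge hs
  obtain ⟨Y, hY, range_Y, Y_last, Y_zero⟩ := hy.exists_closing_edge ht'
  rw [← range_X, ← range_Y] at hdisj ⊢
  simp only [← X_last, ← X_zero, ← Y_last, ← Y_zero] at adj_st adj_st' color_x color_st' color_y
  refine ⟨2 * n + 2 * m, Sum.elim X Y ∘ spliceEquiv.symm, ?_, ?_⟩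
  · exact hX.splice hY hdisj adj_st adj_st'.symm color_x.symm
      (by rw [Sym2.eq_swap, color_st', color_y]) (color_x.trans color_y.symm)
  · rw [EquivLike.range_comp, Set.Sum.elim_range]
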